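/- For every integer k ≥ 2, the highest-order face basis function φ_{0k} := ∇ × (N₀ v_{2k}) on the reference tetrahedron is L²-orthogonal to all vector-valued polynomials of degree at most k−2: for every polynomial map q : ℝ³ → ℝ³ whose components have total degree ≤ k−2 one has ∫_{T̂₃} φ_{0k}(x,y,z) · q(x,y,z) d(x,y,z) = 0. -/

import Mathlib

open MeasureTheory

/-- Jacobi polynomial with parameters `(α, 0)`, via the Rodrigues formula. -/
noncomputable def jacobiP (α : ℝ) (n : ℕ) (x : ℝ) : ℝ :=
  1 / (2 ^ n * (n.factorial : ℝ) * (1 - x) ^ α) *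
    iteratedDeriv n (fun t : ℝ => (1 - t) ^ α * (t ^ 2 - 1) ^ n) x

/-- Integrated Jacobi polynomial `p̂_n^α`. -/
noncomputable def jacobiPhat (α : ℝ) (n : ℕ) (x : ℝ) : ℝ :=
  if n = 0 then 1 else ∫ ξ in (-1 : ℝ)..x, jacobiP α (n - 1) ξ

/-- Partial derivative in the first coordinate. -/
noncomputable def pdx (f : ℝ × ℝ × ℝ → ℝ) (p : ℝ × ℝ × ℝ) : ℝ :=
  deriv (fun x => f (x, p.2.1, p.2.2)) p.1

/-- Partial derivative in the second coordinate. -/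
noncomputable def pdy (f : ℝ × ℝ × ℝ → ℝ) (p : ℝ × ℝ × ℝ) : ℝ :=
  deriv (fun y => f (p.1, y, p.2.2)) p.2.1

/-- Partial derivative in the third coordinate. -/
noncomputable def pdz (f : ℝ × ℝ × ℝ → ℝ) (p : ℝ × ℝ × ℝ) : ℝ :=
  deriv (fun z => f (p.1, p.2.1, z)) p.2.2

/-- Curl of a vector field on `ℝ³`. -/
noncomputable def curl3 (v : ℝ × ℝ × ℝ → ℝ × ℝ × ℝ) (p : ℝ × ℝ × ℝ) : ℝ × ℝ × ℝ :=
  (pdy (fun q => (v q).2.2) p - pdz (fun q => (v q).2.1) p,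
   pdz (fun q => (v q).1) p - pdx (fun q => (v q).2.2) p,
   pdx (fun q => (v q).2.1) p - pdy (fun q => (v q).1) p)

/-- Euclidean dot product on `ℝ³`. -/
noncomputable def dot3 (a b : ℝ × ℝ × ℝ) : ℝ :=
  a.1 * b.1 + a.2.1 * b.2.1 + a.2.2 * b.2.2

/-- The lowest-order Nédélec field `N₀ = (1/2)(y+z-1, -x, -x)` for the edge from
`(-1,0,0)` to `(1,0,0)`. -/
noncomputable def nedelec0 (p : ℝ × ℝ × ℝ) : ℝ × ℝ × ℝ :=
  ((p.2.1 + p.2.2 - 1) / 2, -p.1 / 2, -p.1 / 2)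

/-- The scalar field `v_{ij}(x,y,z) = p̂_j^{2i-1}((2y+z-1)/(1-z)) (1-z)^j`. -/
noncomputable def vFun (i j : ℕ) (p : ℝ × ℝ × ℝ) : ℝ :=
  jacobiPhat (2 * (i : ℝ) - 1) j ((2 * p.2.1 + p.2.2 - 1) / (1 - p.2.2)) * (1 - p.2.2) ^ j

/-- The face basis function `φ_{0k} = ∇ × (N₀ v_{2k})`. -/
noncomputable def phiFace0 (k : ℕ) (p : ℝ × ℝ × ℝ) : ℝ × ℝ × ℝ :=
  curl3 (fun q => vFun 2 k q • nedelec0 q) p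

/-- The reference tetrahedron, the convex hull of
`(-1,0,0)`, `(1,0,0)`, `(0,1,0)`, `(0,0,1)`. -/
def refTet : Set (ℝ × ℝ × ℝ) :=
  {p | 0 ≤ p.2.2 ∧ p.2.2 ≤ 1 ∧ 0 ≤ p.2.1 ∧ p.2.1 ≤ 1 - p.2.2 ∧ |p.1| ≤ 1 - p.2.1 - p.2.2}

/-!
Write `k = n + 1` and let `P` be the polynomial `p̂_{n+1}^3`. The Rodrigues formula and integration
by parts make `(1 - X)³ P'` orthogonal on `[-1, 1]` to all polynomials of degree less than `n`. One
more integration by parts gives the same for `W := (1 - X)² P`: every `(1 - X)² Q` is the derivative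
of some `(1 - X)³ R` with `R` in the same degree range as `Q`. Since `W` vanishes at `±1`, its
derivative is orthogonal even to all polynomials of degree less than `n + 1`.

In Duffy coordinates `(z, t, s)`, with `s = (2y + z - 1) / (1 - z)` and `t = x / (1 - y - z)`, the
Jacobian is `((1 - z) / 2)² (1 - s)`. On each line with `z` and `t` fixed, the components of
`(1 - s) φ_{0k}` are linear combinations of `W` and of `W'` times an affine function of `s`, hence
orthogonal to all polynomials of degree less than `n`. A polynomial field `q` of degree at most
`k - 2 = n - 1` restricts to such polynomials on the line, so already the innermost integral, over
`s`, vanishes.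
-/

section OrthogonalPolynomials

open Polynomial

/-- Integration over `[a, b]` as a linear functional on real polynomials. -/
noncomputable def polyIntegral (a b : ℝ) : ℝ[X] →ₗ[ℝ] ℝ where
  toFun p := ∫ x in a..b, p.eval x
  map_add' p q := by
    simp only [eval_add]
    exact intervalIntegral.integral_add (p.continuous.intervalIntegrable a b)
      (q.continuous.intervalIntegrable a b)
  map_smul' c p := by simp

/-- The polynomials that are `L²(a, b)`-orthogonal to all polynomials of degree less than `n`. -/
noncomputable def orthogonalBelow (a b : ℝ) (n : ℕ) : Submodule ℝ ℝ[X] :=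
  (degreeLT ℝ n).orthogonalBilin ((LinearMap.mul ℝ ℝ[X]).compr₂ (polyIntegral a b))

variable {a b : ℝ} {m n : ℕ} {F L P Q W : ℝ[X]}

theorem polyIntegral_apply : polyIntegral a b P = ∫ x in a..b, P.eval x := rfl

theorem mem_orthogonalBelow :
    F ∈ orthogonalBelow a b n ↔ ∀ Q : ℝ[X], Q.degree < n → polyIntegral a b (F * Q) = 0 := by
  simp [orthogonalBelow, Submodule.mem_orthogonalBilin_iff, mem_degreeLT, mul_comm F]

theorem polyIntegral_derivative : polyIntegral a b (derivative P) = P.eval b - P.eval a :=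
  intervalIntegral.integral_eq_sub_of_hasDerivAt (fun x _ ↦ P.hasDerivAt x)
    ((derivative P).continuous.intervalIntegrable a b)

theorem polyIntegral_derivative_mul (ha : (P * Q).eval a = 0) (hb : (P * Q).eval b = 0) :
    polyIntegral a b (derivative P * Q) = -polyIntegral a b (P * derivative Q) := by
  rw [eq_neg_iff_add_eq_zero, ← map_add, ← derivative_mul, polyIntegral_derivative, ha, hb,
    sub_zero]

theorem mul_mem_orthogonalBelow (hF : F ∈ orthogonalBelow a b (n + m)) (hL : L.natDegree ≤ m) :
    L * F ∈ orthogonalBelow a b n := by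
  refine mem_orthogonalBelow.mpr fun Q hQ ↦ ?_
  rw [mul_comm L F, mul_assoc]
  refine mem_orthogonalBelow.mp hF _ ?_
  rcases eq_or_ne Q 0 with rfl | hQ0
  · simp
  · rw [← natDegree_lt_iff_degree_lt hQ0] at hQ
    exact (degree_le_natDegree).trans_lt (by exact_mod_cast natDegree_mul_le.trans_lt (by omega))

theorem derivative_mem_orthogonalBelow (hW : W ∈ orthogonalBelow a b n)
    (ha : W.eval a = 0) (hb : W.eval b = 0) : derivative W ∈ orthogonalBelow a b (n + 1) := by
  refine mem_orthogonalBelow.mpr fun Q hQ ↦ ?_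
  rw [polyIntegral_derivative_mul (by simp [ha]) (by simp [hb]), neg_eq_zero]
  refine mem_orthogonalBelow.mp hW _ ?_
  rcases eq_or_ne Q 0 with rfl | hQ0
  · simp
  · exact (degree_derivative_lt hQ0).trans_le (Order.lt_succ_iff.mp hQ)

theorem iterate_derivative_mem_orthogonalBelow {U V : ℝ[X]} (hU : V ^ n ∣ U)
    (ha : V.eval a = 0) (hb : V.eval b = 0) :
    derivative^[n] U ∈ orthogonalBelow a b n := by
  suffices h : ∀ j ≤ n, derivative^[j] U ∈ orthogonalBelow a b j from h n le_rfl
  intro j hj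
  induction j with
  | zero => exact mem_orthogonalBelow.mpr fun Q hQ ↦ by simp_all
  | succ j ih =>
    have hV : V ∣ derivative^[j] U :=
      (dvd_pow_self V (by omega)).trans (pow_sub_dvd_iterate_derivative_of_pow_dvd j hU)
    rw [Function.iterate_succ_apply']
    exact derivative_mem_orthogonalBelow (ih (by omega)) (eval_eq_zero_of_dvd_of_eval_eq_zero hV ha)
      (eval_eq_zero_of_dvd_of_eval_eq_zero hV hb)

theorem exists_derivative_X_pow_succ_mul_eq {K : Type*} [Field K] [CharZero K] {n : ℕ}
    (m : ℕ) {Q : K[X]} (hQ : Q.degree < n) :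
    ∃ R : K[X], R.degree < n ∧ derivative (X ^ (m + 1) * R) = X ^ m * Q := by
  refine ⟨∑ i : Fin n, monomial i (Q.coeff i / (i + m + 1)),
    mem_degreeLT.mp (Submodule.sum_mem _ fun i _ ↦ monomial_coe_mem_degreeLT i _), ?_⟩
  conv_rhs => rw [← sum_monomial_eq Q, ← sum_fin (fun i c ↦ monomial i c) (by simp) hQ]
  rw [Finset.mul_sum, Finset.mul_sum, derivative_sum]
  refine Finset.sum_congr rfl fun i _ ↦ ?_
  have hi : (i + m + 1 : K) ≠ 0 := by exact_mod_cast Nat.succ_ne_zero (i + m)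
  rw [X_pow_mul_monomial, X_pow_mul_monomial, derivative_monomial]
  congr 1
  push_cast
  rw [← add_assoc, div_mul_cancel₀ _ hi]

theorem exists_derivative_C_sub_X_pow_succ_mul_eq {K : Type*} [Field K] [CharZero K] {n : ℕ}
    (r : K) (m : ℕ) {Q : K[X]} (hQ : Q.degree < n) :
    ∃ R : K[X], R.degree < n ∧ derivative ((C r - X) ^ (m + 1) * R) = (C r - X) ^ m * Q := by
  have hdeg : (C r - X : K[X]).degree = 1 := by
    rw [← degree_neg, neg_sub, degree_X_sub_C]
  have hcomp (A : K[X]) : (A.comp (C r - X)).degree = A.degree := by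
    rw [degree_comp (by simp [hdeg]), hdeg, mul_one]
  obtain ⟨R, hR, hRQ⟩ :=
    exists_derivative_X_pow_succ_mul_eq m (Q := Q.comp (C r - X)) (by rwa [hcomp])
  refine ⟨-R.comp (C r - X), by rwa [degree_neg, hcomp], ?_⟩
  have h := congr_arg (fun A ↦ A.comp (C r - X)) hRQ
  have hd := derivative_comp (X ^ (m + 1) * R) (C r - X)
  simp only [mul_comp, X_pow_comp, comp_assoc, sub_comp, C_comp, X_comp, sub_sub_cancel, comp_X,
    derivative_sub, derivative_C, derivative_X] at h hd
  rw [mul_neg, derivative_neg, hd, h]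
  ring

theorem exists_derivative_eq_and_eval_eq_zero {K : Type*} [Field K] [CharZero K]
    (S : K[X]) (r : K) : ∃ P : K[X], derivative P = S ∧ P.eval r = 0 := by
  have hS : S.degree < (S.natDegree + 1 : ℕ) :=
    degree_le_natDegree.trans_lt (by exact_mod_cast S.natDegree.lt_succ_self)
  obtain ⟨R, -, hR⟩ := exists_derivative_C_sub_X_pow_succ_mul_eq r 0 hS
  exact ⟨(C r - X) ^ 1 * R, by simpa using hR, by simp⟩

theorem C_sub_X_pow_mul_mem_orthogonalBelow (ha : P.eval a = 0)
    (hP : (C b - X) ^ (m + 1) * derivative P ∈ orthogonalBelow a b n) :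
    (C b - X) ^ m * P ∈ orthogonalBelow a b n := by
  refine mem_orthogonalBelow.mpr fun Q hQ ↦ ?_
  obtain ⟨R, hR, hRQ⟩ := exists_derivative_C_sub_X_pow_succ_mul_eq b m hQ
  calc polyIntegral a b ((C b - X) ^ m * P * Q)
      = polyIntegral a b (derivative ((C b - X) ^ (m + 1) * R) * P) := by
        rw [hRQ, mul_right_comm]
    _ = -polyIntegral a b ((C b - X) ^ (m + 1) * derivative P * R) := by
        rw [polyIntegral_derivative_mul (by simp [ha]) (by simp), mul_right_comm]
    _ = 0 := by rw [mem_orthogonalBelow.mp hP R hR, neg_zero]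

end OrthogonalPolynomials

section Jacobi

open Polynomial

theorem iteratedDeriv_polynomial_eval (U : ℝ[X]) (n : ℕ) :
    iteratedDeriv n (fun x ↦ U.eval x) = fun x ↦ (derivative^[n] U).eval x := by
  induction n with
  | zero => simp
  | succ n ih =>
    rw [iteratedDeriv_succ, ih, Function.iterate_succ_apply']
    exact funext fun x ↦ Polynomial.deriv _

variable (a n : ℕ)

/-- The Jacobi polynomial with parameters `(a, 0)` as an element of `ℝ[X]`. The division in the
Rodrigues formula is exact, see `one_sub_X_pow_mul_jacobiPoly`. -/
noncomputable def jacobiPoly : ℝ[X] :=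
  C (2 ^ n * (n.factorial : ℝ))⁻¹ *
    (derivative^[n] ((1 - X) ^ a * (X ^ 2 - 1) ^ n) / (1 - X) ^ a)

theorem one_sub_X_pow_mul_jacobiPoly :
    (1 - X) ^ a * jacobiPoly a n =
      C (2 ^ n * (n.factorial : ℝ))⁻¹ * derivative^[n] ((1 - X) ^ a * (X ^ 2 - 1) ^ n) := by
  have hdvd : (1 - X : ℝ[X]) ^ a ∣ derivative^[n] ((1 - X) ^ a * (X ^ 2 - 1) ^ n) := by
    have h : (1 - X : ℝ[X]) ^ (a + n) ∣ (1 - X) ^ a * (X ^ 2 - 1) ^ n := by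
      rw [pow_add]
      exact mul_dvd_mul_left _ (pow_dvd_pow_of_dvd ⟨-(1 + X), by ring⟩ n)
    simpa using pow_sub_dvd_iterate_derivative_of_pow_dvd n h
  rw [jacobiPoly, mul_left_comm, EuclideanDomain.mul_div_cancel' (pow_ne_zero a ?_) hdvd]
  exact fun h ↦ by simpa using congr_arg (eval 0) h

theorem one_sub_X_pow_mul_jacobiPoly_mem_orthogonalBelow :
    (1 - X) ^ a * jacobiPoly a n ∈ orthogonalBelow (-1) 1 n := by
  rw [one_sub_X_pow_mul_jacobiPoly, ← smul_eq_C_mul]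
  exact Submodule.smul_mem _ _ (iterate_derivative_mem_orthogonalBelow (V := X ^ 2 - 1)
    (Dvd.intro_left _ rfl) (by simp) (by simp))

theorem jacobiP_natCast_eq_eval_jacobiPoly {x : ℝ} (hx : x ≠ 1) :
    jacobiP a n x = (jacobiPoly a n).eval x := by
  have hx' : (1 - x) ^ a ≠ 0 := pow_ne_zero a (sub_ne_zero.mpr hx.symm)
  have hweight : (fun t : ℝ ↦ (1 - t) ^ (a : ℝ) * (t ^ 2 - 1) ^ n) =
      fun t ↦ ((1 - X) ^ a * (X ^ 2 - 1) ^ n : ℝ[X]).eval t := by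
    simp
  have h := congr_arg (eval x) (one_sub_X_pow_mul_jacobiPoly a n)
  rw [eval_mul, eval_mul, eval_C, eval_pow, eval_sub, eval_one, eval_X] at h
  rw [jacobiP, hweight, iteratedDeriv_polynomial_eval, Real.rpow_natCast, one_div, mul_inv_rev,
    mul_assoc, ← h, inv_mul_cancel_left₀ hx']

theorem jacobiPhat_natCast_succ_eq_eval {P : ℝ[X]} (hP : derivative P = jacobiPoly a n)
    (hP₀ : P.eval (-1) = 0) (x : ℝ) : jacobiPhat a (n + 1) x = P.eval x := by
  have hae : ∀ᵐ ξ : ℝ, ξ ∈ Set.uIoc (-1) x → jacobiP a n ξ = (derivative P).eval ξ := by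
    filter_upwards [Measure.ae_ne volume 1] with ξ hξ _
    rw [hP, jacobiP_natCast_eq_eval_jacobiPoly a n hξ]
  rw [jacobiPhat, if_neg n.succ_ne_zero, Nat.add_sub_cancel,
    intervalIntegral.integral_congr_ae hae, ← polyIntegral_apply, polyIntegral_derivative, hP₀,
    sub_zero]

theorem exists_eval_eq_jacobiPhat_succ : ∃ P : ℝ[X],
    (∀ x, jacobiPhat (a + 1 : ℕ) (n + 1) x = P.eval x) ∧ P.eval (-1) = 0 ∧
      (1 - X) ^ a * P ∈ orthogonalBelow (-1) 1 n := by
  obtain ⟨P, hP, hP₀⟩ := exists_derivative_eq_and_eval_eq_zero (jacobiPoly (a + 1) n) (-1)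
  refine ⟨P, jacobiPhat_natCast_succ_eq_eval (a + 1) n hP hP₀, hP₀, ?_⟩
  refine C_sub_X_pow_mul_mem_orthogonalBelow (b := 1) hP₀ ?_
  rw [hP]
  exact one_sub_X_pow_mul_jacobiPoly_mem_orthogonalBelow (a + 1) n

end Jacobi

section CollapsedCoordinates

/-- The argument `(2y + z - 1) / (1 - z)` of the Jacobi polynomials in `vFun`. On the slice of the
reference tetrahedron at height `z` it runs from `-1` at `y = 0` to `1` at `y = 1 - z`. -/
noncomputable def collapsedCoord (p : ℝ × ℝ × ℝ) : ℝ :=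
  (2 * p.2.1 + p.2.2 - 1) / (1 - p.2.2)

/-- The Duffy parametrization of the reference tetrahedron by `z ∈ [0, 1]`, `t ∈ [-1, 1]` and
`s ∈ [-1, 1]`: `s` is the collapsed coordinate, `t` is the ratio `x / (1 - y - z)`. -/
noncomputable def duffy (z t s : ℝ) : ℝ × ℝ × ℝ :=
  ((1 - z) / 2 * (1 - s) * t, (1 - z) / 2 * (1 + s), z)

theorem collapsedCoord_duffy {z : ℝ} (hz : z ≠ 1) (t s : ℝ) :
    collapsedCoord (duffy z t s) = s := by
  have hz' : 1 - z ≠ 0 := sub_ne_zero.mpr hz.symm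
  simp only [collapsedCoord, duffy]
  field_simp
  ring

theorem collapsedCoord_mem_Icc {p : ℝ × ℝ × ℝ} (hp : p ∈ refTet) :
    collapsedCoord p ∈ Set.Icc (-1) 1 := by
  obtain ⟨-, hz, hy, hyz, -⟩ := hp
  rw [Set.mem_Icc, ← abs_le, collapsedCoord, abs_div, abs_of_nonneg (sub_nonneg.mpr hz)]
  exact div_le_one_of_le₀ (abs_le.mpr ⟨by linarith, by linarith⟩) (sub_nonneg.mpr hz)

theorem isClosed_refTet : IsClosed refTet := by
  simp only [refTet, Set.ofPred_and]
  refine .inter ?_ (.inter ?_ (.inter ?_ (.inter ?_ ?_))) <;>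
    exact isClosed_le (by fun_prop) (by fun_prop)

theorem isCompact_refTet : IsCompact refTet := by
  refine (isCompact_Icc (a := ((-1, 0, 0) : ℝ × ℝ × ℝ)) (b := (1, 1, 1))).of_isClosed_subset
    isClosed_refTet ?_
  rintro ⟨x, y, z⟩ ⟨hz, hz', hy, hyz, hx⟩
  simp only at hz hz' hy hyz hx
  obtain ⟨hx, hx'⟩ := abs_le.mp hx
  exact ⟨⟨by simp only; linarith, hy, hz⟩, ⟨by simp only; linarith, by simp only; linarith, hz'⟩⟩

theorem integrableOn_refTet_of_continuous {F : (ℝ × ℝ × ℝ) × ℝ → ℝ} (hF : Continuous F) :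
    IntegrableOn (fun p ↦ F (p, collapsedCoord p)) refTet := by
  obtain ⟨M, hM⟩ := (isCompact_refTet.prod isCompact_Icc).exists_bound_of_continuousOn
    (s := refTet ×ˢ Set.Icc (-1 : ℝ) 1) hF.continuousOn
  have hmeas : Measurable collapsedCoord := by
    unfold collapsedCoord
    fun_prop
  refine Measure.integrableOn_of_bounded (M := M) isCompact_refTet.measure_lt_top.ne
    (hF.measurable.comp (measurable_id.prodMk hmeas)).aestronglyMeasurable ?_
  filter_upwards [ae_restrict_mem isClosed_refTet.measurableSet] with p hp
  exact hM _ ⟨hp, collapsedCoord_mem_Icc hp⟩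

theorem integral_refTet_indicator_slice (f : ℝ × ℝ × ℝ → ℝ) {y z : ℝ} (hz : z ∈ Set.Icc 0 1)
    (hy : y ∈ Set.Icc 0 (1 - z)) :
    ∫ x, refTet.indicator f (x, y, z) = ∫ x in -(1 - y - z)..(1 - y - z), f (x, y, z) := by
  have hslice : (fun x ↦ refTet.indicator f (x, y, z)) =
      (Set.Icc (-(1 - y - z)) (1 - y - z)).indicator fun x ↦ f (x, y, z) := by
    ext x
    have hiff : (x, y, z) ∈ refTet ↔ x ∈ Set.Icc (-(1 - y - z)) (1 - y - z) := by
      simp [refTet, hz.1, hz.2, hy.1, hy.2, abs_le]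
    classical simp only [Set.indicator_apply, hiff]
  rw [hslice, integral_indicator measurableSet_Icc, integral_Icc_eq_integral_Ioc,
    intervalIntegral.integral_of_le (by linarith [hy.2])]

theorem setIntegral_refTet {f : ℝ × ℝ × ℝ → ℝ} (hf : IntegrableOn f refTet) :
    ∫ p in refTet, f p =
      ∫ z in 0..1, ∫ y in 0..(1 - z), ∫ x in -(1 - y - z)..(1 - y - z), f (x, y, z) := by
  have hind := hf.integrable_indicator isClosed_refTet.measurableSet
  have hout {y z : ℝ} (h : ¬(z ∈ Set.Icc 0 1 ∧ y ∈ Set.Icc 0 (1 - z))) (x : ℝ) :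
      refTet.indicator f (x, y, z) = 0 :=
    Set.indicator_of_notMem (fun hp ↦ h ⟨⟨hp.1, hp.2.1⟩, hp.2.2.1, hp.2.2.2.1⟩) f
  have hyslice (z : ℝ) (hz : z ∈ Set.Icc 0 1) : ∫ y, ∫ x, refTet.indicator f (x, y, z) =
      ∫ y in 0..(1 - z), ∫ x in -(1 - y - z)..(1 - y - z), f (x, y, z) := by
    rw [intervalIntegral.integral_of_le (sub_nonneg.mpr hz.2), ← integral_Icc_eq_integral_Ioc,
      ← setIntegral_congr_fun measurableSet_Icc fun y hy ↦
        integral_refTet_indicator_slice f hz hy]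
    refine (setIntegral_eq_integral_of_forall_compl_eq_zero fun y hy ↦ ?_).symm
    simp [hout fun h ↦ hy h.2]
  rw [← integral_indicator isClosed_refTet.measurableSet, Measure.volume_eq_prod,
    integral_prod_symm _ hind, Measure.volume_eq_prod,
    integral_prod_symm _ (Integrable.integral_prod_right hind),
    intervalIntegral.integral_of_le zero_le_one, ← integral_Icc_eq_integral_Ioc,
    ← setIntegral_congr_fun measurableSet_Icc hyslice]
  refine (setIntegral_eq_integral_of_forall_compl_eq_zero fun z hz ↦ ?_).symm
  simp [hout fun h ↦ hz h.1]

theorem integral_slice_eq_integral_duffy {f : ℝ × ℝ × ℝ → ℝ} {z : ℝ}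
    (hf : Continuous fun q : ℝ × ℝ ↦ f (duffy z q.2 q.1)) :
    ∫ y in 0..(1 - z), ∫ x in -(1 - y - z)..(1 - y - z), f (x, y, z) =
      ∫ t in -1..1, ∫ s in -1..1, ((1 - z) / 2) ^ 2 * (1 - s) * f (duffy z t s) := by
  have hx (s : ℝ) : ∫ x in -((1 - z) / 2 * (1 - s))..((1 - z) / 2 * (1 - s)),
      f (x, (1 - z) / 2 * (1 + s), z) =
        ∫ t in -1..1, (1 - z) / 2 * (1 - s) * f (duffy z t s) := by
    rw [intervalIntegral.integral_const_mul, ← smul_eq_mul]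
    simpa [duffy] using (intervalIntegral.smul_integral_comp_mul_left (a := -1) (b := 1)
      (fun x ↦ f (x, (1 - z) / 2 * (1 + s), z)) ((1 - z) / 2 * (1 - s))).symm
  have hy : ∫ y in 0..(1 - z), ∫ x in -(1 - y - z)..(1 - y - z), f (x, y, z) =
      ∫ s in -1..1, (1 - z) / 2 * ∫ x in -((1 - z) / 2 * (1 - s))..((1 - z) / 2 * (1 - s)),
        f (x, (1 - z) / 2 * (1 + s), z) := by
    have h := intervalIntegral.smul_integral_comp_add_mul (a := -1) (b := 1)
      (fun y ↦ ∫ x in -(1 - y - z)..(1 - y - z), f (x, y, z)) ((1 - z) / 2) ((1 - z) / 2)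
    have hwidth (s : ℝ) : 1 - ((1 - z) / 2 + (1 - z) / 2 * s) - z = (1 - z) / 2 * (1 - s) := by
      ring
    rw [show (1 - z) / 2 + (1 - z) / 2 * -1 = 0 by ring,
      show (1 - z) / 2 + (1 - z) / 2 * 1 = 1 - z by ring] at h
    simpa only [hwidth, intervalIntegral.integral_const_mul, smul_eq_mul, mul_add, mul_one]
      using h.symm
  simp only [hy, hx, ← intervalIntegral.integral_const_mul]
  rw [intervalIntegral_intervalIntegral_swap]
  · simp only [pow_two, mul_assoc]
  · have hcont : Continuous (Function.uncurry fun s t ↦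
        (1 - z) / 2 * ((1 - z) / 2 * (1 - s) * f (duffy z t s))) :=
      continuous_const.mul (.mul (by fun_prop) hf)
    exact (hcont.continuousOn.integrableOn_compact (isCompact_uIcc.prod isCompact_uIcc)).mono_set
      (Set.prod_mono Set.uIoc_subset_uIcc Set.uIoc_subset_uIcc)

theorem setIntegral_refTet_eq_integral_duffy {F : (ℝ × ℝ × ℝ) × ℝ → ℝ} (hF : Continuous F) :
    ∫ p in refTet, F (p, collapsedCoord p) =
      ∫ z in 0..1, ∫ t in -1..1, ∫ s in -1..1,
        ((1 - z) / 2) ^ 2 * (1 - s) * F (duffy z t s, s) := by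
  rw [setIntegral_refTet (integrableOn_refTet_of_continuous hF)]
  refine intervalIntegral.integral_congr_ae ?_
  filter_upwards [Measure.ae_ne volume 1] with z hz _
  have hcont : Continuous fun q : ℝ × ℝ ↦
      F (duffy z q.2 q.1, collapsedCoord (duffy z q.2 q.1)) := by
    simp only [collapsedCoord_duffy hz]
    unfold duffy
    fun_prop
  rw [integral_slice_eq_integral_duffy (f := fun p ↦ F (p, collapsedCoord p)) hcont]
  simp only [collapsedCoord_duffy hz]

end CollapsedCoordinates

section FaceField

open Polynomial

theorem curl3_smul_nedelec0 {v : ℝ × ℝ × ℝ → ℝ} {x y z vx vy vz : ℝ}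
    (hx : HasDerivAt (fun t ↦ v (t, y, z)) vx x) (hy : HasDerivAt (fun t ↦ v (x, t, z)) vy y)
    (hz : HasDerivAt (fun t ↦ v (x, y, t)) vz z) :
    curl3 (fun q ↦ v q • nedelec0 q) (x, y, z) =
      (-(x / 2) * (vy - vz),
        v (x, y, z) + (y + z - 1) / 2 * vz + x / 2 * vx,
        -v (x, y, z) - (y + z - 1) / 2 * vy - x / 2 * vx) := by
  have hNx : HasDerivAt (fun t : ℝ ↦ -t / 2) (-1 / 2) x := (hasDerivAt_id x).neg.div_const 2
  have hNy : HasDerivAt (fun t : ℝ ↦ (t + z - 1) / 2) (1 / 2) y :=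
    (((hasDerivAt_id y).add_const z).sub_const 1).div_const 2
  have hNz : HasDerivAt (fun t : ℝ ↦ (y + t - 1) / 2) (1 / 2) z :=
    (((hasDerivAt_id z).const_add y).sub_const 1).div_const 2
  simp only [curl3, pdx, pdy, pdz, nedelec0, Prod.smul_fst, Prod.smul_snd, smul_eq_mul]
  rw [(hy.mul_const (-x / 2)).deriv, (hz.mul_const (-x / 2)).deriv, (hx.fun_mul hNx).deriv,
    (hy.fun_mul hNy).deriv, (hz.fun_mul hNz).deriv]
  ext <;> ring

variable (P : ℝ[X]) (m : ℕ)

theorem hasDerivAt_eval_collapsedCoord_mul_pow_y (x y : ℝ) {z : ℝ} (hz : z ≠ 1) :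
    HasDerivAt (fun t ↦ P.eval (collapsedCoord (x, t, z)) * (1 - z) ^ (m + 1))
      (2 * (1 - z) ^ m * (derivative P).eval (collapsedCoord (x, y, z))) y := by
  have hz' : 1 - z ≠ 0 := sub_ne_zero.mpr hz.symm
  have hcoord : HasDerivAt (fun t ↦ collapsedCoord (x, t, z)) (2 / (1 - z)) y := by
    simpa [collapsedCoord] using
      ((((hasDerivAt_id y).const_mul 2).add_const z).sub_const 1).div_const (1 - z)
  refine (((P.hasDerivAt _).comp y hcoord).mul_const _).congr_deriv ?_
  rw [pow_succ]
  field_simp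

theorem hasDerivAt_eval_collapsedCoord_mul_pow_z (x y : ℝ) {z : ℝ} (hz : z ≠ 1) :
    HasDerivAt (fun t ↦ P.eval (collapsedCoord (x, y, t)) * (1 - t) ^ (m + 1))
      ((1 - z) ^ m *
        ((1 + collapsedCoord (x, y, z)) * (derivative P).eval (collapsedCoord (x, y, z)) -
          (m + 1) * P.eval (collapsedCoord (x, y, z)))) z := by
  have hz' : 1 - z ≠ 0 := sub_ne_zero.mpr hz.symm
  have hsub : HasDerivAt (fun t : ℝ ↦ 1 - t) (-1) z := (hasDerivAt_id z).const_sub 1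
  have hcoord : HasDerivAt (fun t ↦ collapsedCoord (x, y, t))
      ((1 + collapsedCoord (x, y, z)) / (1 - z)) z := by
    refine ((((hasDerivAt_id z).const_add (2 * y)).sub_const 1).div hsub hz').congr_deriv ?_
    simp only [collapsedCoord, id]
    field_simp
    ring
  refine (((P.hasDerivAt _).comp z hcoord).mul (hsub.pow (m + 1))).congr_deriv ?_
  simp only [Function.comp_apply, Pi.pow_apply, Nat.add_sub_cancel]
  push_cast
  rw [pow_succ]
  field_simp
  ring

/-- The curl of `P(s) (1 - z) ^ (m + 1) N₀` with the collapsed coordinate `s` treated as a separate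
variable, which makes it a polynomial expression. -/
noncomputable def faceField (p : ℝ × ℝ × ℝ) (s : ℝ) : ℝ × ℝ × ℝ :=
  (-(p.1 / 2) * ((1 - p.2.2) ^ m * ((1 - s) * (derivative P).eval s + (m + 1) * P.eval s)),
    (1 - p.2.2) ^ (m + 1) * P.eval s + (p.2.1 + p.2.2 - 1) / 2 *
      ((1 - p.2.2) ^ m * ((1 + s) * (derivative P).eval s - (m + 1) * P.eval s)),
    -((1 - p.2.2) ^ (m + 1) * P.eval s) -
      (p.2.1 + p.2.2 - 1) * ((1 - p.2.2) ^ m * (derivative P).eval s))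

theorem continuous_faceField :
    Continuous fun u : (ℝ × ℝ × ℝ) × ℝ ↦ faceField P m u.1 u.2 := by
  unfold faceField
  fun_prop

variable {P m}

theorem phiFace0_eq_faceField (hP : ∀ x, jacobiPhat (3 : ℕ) (m + 1) x = P.eval x)
    {p : ℝ × ℝ × ℝ} (hp : p.2.2 ≠ 1) :
    phiFace0 (m + 1) p = faceField P m p (collapsedCoord p) := by
  obtain ⟨x, y, z⟩ := p
  have hv : vFun 2 (m + 1) =
      fun q ↦ P.eval (collapsedCoord q) * (1 - q.2.2) ^ (m + 1) := by
    ext q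
    rw [vFun, show 2 * ((2 : ℕ) : ℝ) - 1 = (3 : ℕ) by norm_num, hP, collapsedCoord]
  have hconst := hasDerivAt_const x (P.eval (collapsedCoord (x, y, z)) * (1 - z) ^ (m + 1))
  rw [phiFace0, hv, curl3_smul_nedelec0 hconst (hasDerivAt_eval_collapsedCoord_mul_pow_y P m x y hp)
    (hasDerivAt_eval_collapsedCoord_mul_pow_z P m x y hp)]
  simp only [faceField]
  ext <;> ring

theorem one_sub_smul_faceField_duffy {W : ℝ[X]} (hW : W = (1 - X) ^ 2 * P) (z t s : ℝ) :
    (1 - s) • faceField P m (duffy z t s) s = ((1 - z) ^ (m + 1) / 4) •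
      ((-t * ((1 - X) * derivative W + (m + 3 : ℝ) • W).eval s,
        ((m + 3 : ℝ) • W - (1 + X) * derivative W).eval s,
        2 * (derivative W).eval s) : ℝ × ℝ × ℝ) := by
  have hW' : derivative W = (1 - X) ^ 2 * derivative P - 2 * (1 - X) * P := by
    rw [hW, derivative_mul, derivative_pow, derivative_sub, derivative_one, derivative_X]
    simp only [Nat.cast_ofNat, map_ofNat]
    ring
  rw [hW', hW]
  simp only [faceField, duffy, Prod.smul_mk, smul_eq_mul, eval_mul, eval_add, eval_sub,
    eval_pow, eval_smul, eval_one, eval_X, eval_ofNat]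
  ext <;> ring

theorem integral_one_sub_mul_dot3_faceField_duffy_eq_zero {n : ℕ} (hP₀ : P.eval (-1) = 0)
    (hP : (1 - X) ^ 2 * P ∈ orthogonalBelow (-1) 1 n) {Q₁ Q₂ Q₃ : ℝ[X]}
    (h₁ : Q₁.degree < n) (h₂ : Q₂.degree < n) (h₃ : Q₃.degree < n) (z t : ℝ) :
    ∫ s in -1..1, (1 - s) *
      dot3 (faceField P m (duffy z t s) s) (Q₁.eval s, Q₂.eval s, Q₃.eval s) = 0 := by
  set W := (1 - X) ^ 2 * P with hW
  have hW' : derivative W ∈ orthogonalBelow (-1) 1 (n + 1) :=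
    derivative_mem_orthogonalBelow hP (by simp [hW, hP₀]) (by simp [hW])
  have hmul {L : ℝ[X]} (hL : L.natDegree ≤ 1) : L * derivative W ∈ orthogonalBelow (-1) 1 n :=
    mul_mem_orthogonalBelow hW' hL
  have hA₁ : (1 - X) * derivative W + (m + 3 : ℝ) • W ∈ orthogonalBelow (-1) 1 n :=
    add_mem (hmul (by compute_degree)) (Submodule.smul_mem _ _ hP)
  have hA₂ : (m + 3 : ℝ) • W - (1 + X) * derivative W ∈ orthogonalBelow (-1) 1 n :=
    sub_mem (Submodule.smul_mem _ _ hP) (hmul (by compute_degree))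
  have hA₃ : derivative W ∈ orthogonalBelow (-1) 1 n := by simpa using hmul (L := 1) (by simp)
  have hsum (s : ℝ) :
      (1 - s) * dot3 (faceField P m (duffy z t s) s) (Q₁.eval s, Q₂.eval s, Q₃.eval s) =
        (((1 - z) ^ (m + 1) / 4) • (-t • (((1 - X) * derivative W + (m + 3 : ℝ) • W) * Q₁) +
          ((m + 3 : ℝ) • W - (1 + X) * derivative W) * Q₂ +
            (2 : ℝ) • (derivative W * Q₃))).eval s := by
    have h := one_sub_smul_faceField_duffy (m := m) hW z t s
    rw [Prod.ext_iff, Prod.ext_iff] at h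
    obtain ⟨e₁, e₂, e₃⟩ := h
    simp only [Prod.smul_fst, Prod.smul_snd, smul_eq_mul] at e₁ e₂ e₃
    simp only [dot3, eval_smul, eval_add, eval_mul, smul_eq_mul] at e₁ ⊢
    linear_combination eval s Q₁ * e₁ + eval s Q₂ * e₂ + eval s Q₃ * e₃
  simp only [hsum, ← polyIntegral_apply, map_smul, map_add]
  rw [mem_orthogonalBelow.mp hA₁ Q₁ h₁, mem_orthogonalBelow.mp hA₂ Q₂ h₂,
    mem_orthogonalBelow.mp hA₃ Q₃ h₃]
  simp

end FaceField

section DuffyLine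

/-- The pullback of a polynomial on `ℝ³` along the line `s ↦ duffy z t s`. -/
noncomputable def restrictToDuffyLine (z t : ℝ) : MvPolynomial (Fin 3) ℝ →ₐ[ℝ] Polynomial ℝ :=
  MvPolynomial.aeval ![.C ((1 - z) / 2 * t) * (1 - .X), .C ((1 - z) / 2) * (1 + .X), .C z]

theorem eval_restrictToDuffyLine (z t s : ℝ) (q : MvPolynomial (Fin 3) ℝ) :
    (restrictToDuffyLine z t q).eval s =
      MvPolynomial.eval ![(duffy z t s).1, (duffy z t s).2.1, (duffy z t s).2.2] q := by
  have hcoord (i : Fin 3) : Polynomial.eval s (restrictToDuffyLine z t (.X i)) =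
      ![(duffy z t s).1, (duffy z t s).2.1, (duffy z t s).2.2] i := by
    fin_cases i <;> simp [restrictToDuffyLine, duffy, mul_right_comm]
  suffices h : (Polynomial.aeval s).comp (restrictToDuffyLine z t) =
      MvPolynomial.aeval ![(duffy z t s).1, (duffy z t s).2.1, (duffy z t s).2.2] from
    DFunLike.congr_fun h q
  exact MvPolynomial.algHom_ext fun i ↦ by simpa using hcoord i

theorem degree_restrictToDuffyLine_lt (z t : ℝ) {q : MvPolynomial (Fin 3) ℝ} {d : ℕ}
    (hq : q.totalDegree ≤ d) : (restrictToDuffyLine z t q).degree < (d + 1 : ℕ) := by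
  refine Polynomial.degree_le_natDegree.trans_lt (Nat.cast_lt.mpr (Nat.lt_succ_iff.mpr ?_))
  refine (MvPolynomial.aeval_natDegree_le (n := 1) q hq _ fun i ↦ ?_).trans_eq (mul_one d)
  fin_cases i
  · change (Polynomial.C ((1 - z) / 2 * t) * (1 - Polynomial.X)).natDegree ≤ 1
    compute_degree
  · change (Polynomial.C ((1 - z) / 2) * (1 + Polynomial.X)).natDegree ≤ 1
    compute_degree
  · exact (Polynomial.natDegree_C z).trans_le zero_le_one

theorem continuous_eval_vec3 (q : MvPolynomial (Fin 3) ℝ) :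
    Continuous fun p : ℝ × ℝ × ℝ ↦ MvPolynomial.eval ![p.1, p.2.1, p.2.2] q := by
  refine (MvPolynomial.continuous_eval q).comp (continuous_pi fun i ↦ ?_)
  fin_cases i
  · exact continuous_fst
  · exact continuous_snd.fst
  · exact continuous_snd.snd

theorem continuous_dot3_faceField_eval (P : Polynomial ℝ) (m : ℕ)
    (q₁ q₂ q₃ : MvPolynomial (Fin 3) ℝ) :
    Continuous fun u : (ℝ × ℝ × ℝ) × ℝ ↦ dot3 (faceField P m u.1 u.2)
      (MvPolynomial.eval ![u.1.1, u.1.2.1, u.1.2.2] q₁,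
        MvPolynomial.eval ![u.1.1, u.1.2.1, u.1.2.2] q₂,
        MvPolynomial.eval ![u.1.1, u.1.2.1, u.1.2.2] q₃) := by
  have hφ := continuous_faceField P m
  have hq (q : MvPolynomial (Fin 3) ℝ) : Continuous fun u : (ℝ × ℝ × ℝ) × ℝ ↦
      MvPolynomial.eval ![u.1.1, u.1.2.1, u.1.2.2] q :=
    (continuous_eval_vec3 q).comp continuous_fst
  exact ((hφ.fst.mul (hq q₁)).add (hφ.snd.fst.mul (hq q₂))).add (hφ.snd.snd.mul (hq q₃))

theorem ae_snd_snd_ne (c : ℝ) : ∀ᵐ p : ℝ × ℝ × ℝ, p.2.2 ≠ c :=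
  (Measure.quasiMeasurePreserving_snd.comp Measure.quasiMeasurePreserving_snd).ae
    (Measure.ae_ne volume c)

end DuffyLine

/-- The highest-order face basis function `φ_{0k}` is `L²(T̂₃)`-orthogonal to all
vector-valued polynomials of total degree at most `k - 2`. -/
theorem phiFace0_orthogonal_to_low_order (k : ℕ) (hk : 2 ≤ k)
    (q₁ q₂ q₃ : MvPolynomial (Fin 3) ℝ)
    (h₁ : q₁.totalDegree ≤ k - 2) (h₂ : q₂.totalDegree ≤ k - 2)
    (h₃ : q₃.totalDegree ≤ k - 2) :
    ∫ p in refTet,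
        dot3 (phiFace0 k p)
          (MvPolynomial.eval ![p.1, p.2.1, p.2.2] q₁,
           MvPolynomial.eval ![p.1, p.2.1, p.2.2] q₂,
           MvPolynomial.eval ![p.1, p.2.1, p.2.2] q₃) = 0 := by
  obtain ⟨d, rfl⟩ := Nat.exists_eq_add_of_le' hk
  obtain ⟨P, hP, hP₀, horth⟩ := exists_eval_eq_jacobiPhat_succ 2 (d + 1)
  rw [Nat.add_sub_cancel] at h₁ h₂ h₃
  have hphi : ∀ᵐ p : ℝ × ℝ × ℝ, phiFace0 (d + 2) p = faceField P (d + 1) p (collapsedCoord p) :=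
    (ae_snd_snd_ne 1).mono fun p hp ↦ phiFace0_eq_faceField hP hp
  have hline (z t : ℝ) := integral_one_sub_mul_dot3_faceField_duffy_eq_zero (m := d + 1) hP₀ horth
    (degree_restrictToDuffyLine_lt z t h₁) (degree_restrictToDuffyLine_lt z t h₂)
    (degree_restrictToDuffyLine_lt z t h₃) z t
  simp only [eval_restrictToDuffyLine] at hline
  rw [setIntegral_congr_ae isClosed_refTet.measurableSet
      (hphi.mono fun p hp _ ↦ by rw [hp]),
    setIntegral_refTet_eq_integral_duffy
      (continuous_dot3_faceField_eval P (d + 1) q₁ q₂ q₃)]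
  simp only [mul_assoc, intervalIntegral.integral_const_mul, hline, mul_zero,
    intervalIntegral.integral_zero]
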